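/- arXiv:2603.05007 — 2 statements merged into one kernel-verified Lean document; each statement's English description precedes it below -/
import Mathlib

section
/- Let V be a finite set and F a finite family of n three-element subsets of V. Then for every pairing p of V there exists a transversal S of p such that the number of e ∈ F with e ⊆ S is at most n/8, i.e., 8·|{e ∈ F : e ⊆ S}| ≤ n. -/
open Finset

/-!
Every element belongs to half of the transversals, and more precisely, among the transversals
containing a fixed set `A`, at most half contain a further element `v`: exchanging `v` for `p v`
injects those that contain `v` into those that do not. Hence a set `e` lies in at most a fraction
`2 ^ (-#e)` of all transversals, and averaging `∑ e ∈ F with e ⊆ S, 2 ^ #e` over the transversals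
`S` gives at most `#F`.
-/

open scoped symmDiff

section Transversals

variable {V : Type*} [Fintype V] [DecidableEq V] {p : V → V}

/-- The transversals of a pairing `p`: the sets containing exactly one of `v` and `p v` for every
`v`. For an arbitrary map `p` there may be none. -/
def transversals (p : V → V) : Finset (Finset V) := {S | ∀ v, v ∈ S ↔ p v ∉ S}

lemma mem_transversals {S : Finset V} : S ∈ transversals p ↔ ∀ v, v ∈ S ↔ p v ∉ S := by
  simp only [transversals, mem_filter_univ]

lemma transversals_nonempty (hp : p.Involutive) (hp_ne : ∀ v, p v ≠ v) :
    (transversals p).Nonempty := by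
  let rank := Fintype.equivFin V
  refine ⟨univ.filter fun v => rank v < rank (p v), mem_transversals.2 fun v => ?_⟩
  have rank_ne : rank v ≠ rank (p v) := rank.injective.ne (hp_ne v).symm
  simp only [mem_filter_univ, hp v, not_lt]
  exact rank_ne.le_iff_lt.symm

lemma symmDiff_pair_mem_transversals (hp : p.Involutive) {S : Finset V}
    (hS : S ∈ transversals p) (v : V) : S ∆ {v, p v} ∈ transversals p := by
  refine mem_transversals.2 fun w => ?_
  have pair_invariant : p w ∈ ({v, p v} : Finset V) ↔ w ∈ ({v, p v} : Finset V) := by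
    simp only [mem_insert, mem_singleton, hp.injective.eq_iff, hp.eq_iff, or_comm]
  have := mem_transversals.1 hS w
  simp only [mem_symmDiff, pair_invariant]
  tauto

lemma card_transversals_mem_le_card_notMem (hp : p.Involutive) {A : Finset V} {v : V}
    (hv : v ∉ A) :
    #{S ∈ transversals p | A ⊆ S ∧ v ∈ S} ≤ #{S ∈ transversals p | A ⊆ S ∧ v ∉ S} := by
  refine card_le_card_of_injOn (· ∆ {v, p v}) (fun S hS => ?_)
    (symmDiff_left_injective _).injOn
  obtain ⟨hS, hAS, hvS⟩ := mem_filter.1 hS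
  have hpvS : p v ∉ S := (mem_transversals.1 hS v).1 hvS
  have disjoint_pair : Disjoint A {v, p v} := by
    simpa using ⟨hv, fun h => hpvS (hAS h)⟩
  refine mem_filter.2 ⟨symmDiff_pair_mem_transversals hp hS v, fun x hx => ?_, ?_⟩
  · exact mem_symmDiff.2 (.inl ⟨hAS hx, disjoint_left.1 disjoint_pair hx⟩)
  · simp [mem_symmDiff, hvS]

lemma two_mul_card_transversals_insert_le (hp : p.Involutive) {A : Finset V} {v : V}
    (hv : v ∉ A) :
    2 * #{S ∈ transversals p | insert v A ⊆ S} ≤ #{S ∈ transversals p | A ⊆ S} := by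
  calc 2 * #{S ∈ transversals p | insert v A ⊆ S}
      = #{S ∈ transversals p | A ⊆ S ∧ v ∈ S} + #{S ∈ transversals p | A ⊆ S ∧ v ∈ S} := by
        simp only [insert_subset_iff, and_comm, two_mul]
    _ ≤ #{S ∈ transversals p | A ⊆ S ∧ v ∈ S} + #{S ∈ transversals p | A ⊆ S ∧ v ∉ S} := by
        exact Nat.add_le_add_left (card_transversals_mem_le_card_notMem hp hv) _
    _ = #{S ∈ transversals p | A ⊆ S} := by
        simp only [← filter_filter, card_filter_add_card_filter_not]

lemma two_pow_card_mul_card_transversals_le (hp : p.Involutive) (A : Finset V) :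
    2 ^ #A * #{S ∈ transversals p | A ⊆ S} ≤ #(transversals p) := by
  induction A using Finset.induction_on with
  | empty => simp
  | insert v A hv ih =>
    calc 2 ^ #(insert v A) * #{S ∈ transversals p | insert v A ⊆ S}
        = 2 ^ #A * (2 * #{S ∈ transversals p | insert v A ⊆ S}) := by
          rw [card_insert_of_notMem hv, pow_succ, mul_assoc]
      _ ≤ 2 ^ #A * #{S ∈ transversals p | A ⊆ S} := by
          gcongr
          exact two_mul_card_transversals_insert_le hp hv
      _ ≤ #(transversals p) := ih

lemma sum_transversals_sum_two_pow_card_le (hp : p.Involutive) (F : Finset (Finset V)) :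
    ∑ S ∈ transversals p, ∑ e ∈ F with e ⊆ S, 2 ^ #e ≤ ∑ _S ∈ transversals p, #F := by
  calc ∑ S ∈ transversals p, ∑ e ∈ F with e ⊆ S, 2 ^ #e
      = ∑ e ∈ F, ∑ S ∈ transversals p with e ⊆ S, 2 ^ #e := by
        simp only [sum_filter]
        exact sum_comm
    _ = ∑ e ∈ F, 2 ^ #e * #{S ∈ transversals p | e ⊆ S} := by
        simp only [sum_const, smul_eq_mul, mul_comm]
    _ ≤ ∑ _e ∈ F, #(transversals p) :=
        sum_le_sum fun e _ => two_pow_card_mul_card_transversals_le hp e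
    _ = ∑ _S ∈ transversals p, #F := by
        simp only [sum_const, smul_eq_mul, mul_comm]

end Transversals

theorem triangle_s3_pairing_upper_general {V : Type*} [Finite V] [DecidableEq V]
    (F : Finset (Finset V)) {p : V → V} (hp : p.Involutive) (hp_ne : ∀ v, p v ≠ v) :
    ∃ S : Finset V, (∀ v, v ∈ S ↔ p v ∉ S) ∧ ∑ e ∈ F with e ⊆ S, 2 ^ #e ≤ #F := by
  have := Fintype.ofFinite V
  obtain ⟨S, hS, hle⟩ := exists_le_of_sum_le (transversals_nonempty hp hp_ne)
    (sum_transversals_sum_two_pow_card_le hp F)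
  exact ⟨S, mem_transversals.1 hS, hle⟩

/-- For any family `F` of `n` three-element subsets of a finite set `V` and any pairing
`p` of `V`, there is a transversal `S` of `p` such that the number of `e ∈ F` fully
contained in `S` is at most `n/8`. -/
theorem triangle_s3_pairing_upper {V : Type*} [Fintype V] [DecidableEq V]
    (n : ℕ) (F : Finset (Finset V)) (hn : F.card = n)
    (hF : ∀ e ∈ F, e.card = 3)
    (p : V → V) (hp_inv : ∀ v, p (p v) = v) (hp_ne : ∀ v, p v ≠ v) :
    ∃ S : Finset V, (∀ v, v ∈ S ↔ p v ∉ S) ∧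
      8 * (F.filter (fun e => e ⊆ S)).card ≤ n := by
  obtain ⟨S, hS, hle⟩ := triangle_s3_pairing_upper_general F hp_inv hp_ne
  have weight_eq : ∑ e ∈ F with e ⊆ S, 2 ^ #e = #{e ∈ F | e ⊆ S} * 8 :=
    sum_const_nat fun e he => by rw [hF e (mem_filter.1 he).1]; rfl
  exact ⟨S, hS, by rwa [weight_eq, hn, mul_comm] at hle⟩
end

section
/- There exists a pairing p of ℤ × ℤ such that for every (x, y) ∈ ℤ × ℤ, the unit square Q(x,y) = {(x,y), (x+1,y), (x,y+1), (x+1,y+1)} contains a pair, i.e., there is some v ∈ Q(x,y) with p(v) ∈ Q(x,y). Consequently, every transversal S of p satisfies 1 ≤ |Q(x,y) ∩ S| ≤ 3 for every (x, y) ∈ ℤ × ℤ. -/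
/-- The unit square of the square grid with bottom-left corner `(x, y)`. -/
def unitSquare (x y : ℤ) : Finset (ℤ × ℤ) :=
  {(x, y), (x + 1, y), (x, y + 1), (x + 1, y + 1)}

/-- A set `S` is a transversal of `p` if it contains exactly one of `v` and `p v` for every `v`.
The map `p` stands for a pairing, but is not required to be an involution. -/
def IsTransversal {V : Type*} (p : V → V) (S : Set V) : Prop :=
  ∀ v, v ∈ S ↔ p v ∉ S

namespace IsTransversal

variable {V : Type*} {p : V → V} {S Q : Set V}

theorem compl (hS : IsTransversal p S) : IsTransversal p Sᶜ :=
  fun v => not_congr (hS v)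

theorem inter_nonempty (hS : IsTransversal p S) (hQ : ∃ v ∈ Q, p v ∈ Q) : (Q ∩ S).Nonempty := by
  obtain ⟨v, hv, hpv⟩ := hQ
  by_cases hvS : v ∈ S
  · exact ⟨v, hv, hvS⟩
  · exact ⟨p v, hpv, not_not.mp (mt (hS v).mpr hvS)⟩

theorem inter_ssubset (hS : IsTransversal p S) (hQ : ∃ v ∈ Q, p v ∈ Q) : Q ∩ S ⊂ Q :=
  Set.inter_ssubset_left_iff.mpr (Set.not_subset.mpr (hS.compl.inter_nonempty hQ))

theorem ncard_inter_pos (hS : IsTransversal p S) (hfin : Q.Finite) (hQ : ∃ v ∈ Q, p v ∈ Q) :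
    0 < (Q ∩ S).ncard :=
  (Set.ncard_pos (hfin.inter_of_left S)).mpr (hS.inter_nonempty hQ)

theorem ncard_inter_lt (hS : IsTransversal p S) (hfin : Q.Finite) (hQ : ∃ v ∈ Q, p v ∈ Q) :
    (Q ∩ S).ncard < Q.ncard :=
  Set.ncard_lt_ncard (hS.inter_ssubset hQ) hfin

end IsTransversal

/-- The pairing of the square grid that joins each `(x, y)` with `x + y` even to `(x, y + 1)`.
Neighbouring columns are offset by one, so that every unit square has a pair as its left or its
right edge. -/
def columnPairing (v : ℤ × ℤ) : ℤ × ℤ :=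
  if Even (v.1 + v.2) then (v.1, v.2 + 1) else (v.1, v.2 - 1)

theorem columnPairing_of_even {x y : ℤ} (h : Even (x + y)) : columnPairing (x, y) = (x, y + 1) :=
  if_pos h

theorem columnPairing_of_odd {x y : ℤ} (h : Odd (x + y)) : columnPairing (x, y) = (x, y - 1) :=
  if_neg (Int.not_even_iff_odd.mpr h)

theorem columnPairing_involutive : Function.Involutive columnPairing := by
  rintro ⟨x, y⟩
  rcases Int.even_or_odd (x + y) with h | h
  · have h_above : Odd (x + (y + 1)) := by grind
    rw [columnPairing_of_even h, columnPairing_of_odd h_above, add_sub_cancel_right]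
  · have h_below : Even (x + (y - 1)) := by grind
    rw [columnPairing_of_odd h, columnPairing_of_even h_below, sub_add_cancel]

theorem columnPairing_ne_self (v : ℤ × ℤ) : columnPairing v ≠ v := by
  obtain ⟨x, y⟩ := v
  rcases Int.even_or_odd (x + y) with h | h
  · simp [columnPairing_of_even h]
  · simp [columnPairing_of_odd h]

theorem exists_columnPairing_mem_unitSquare (x y : ℤ) :
    ∃ v ∈ unitSquare x y, columnPairing v ∈ unitSquare x y := by
  rcases Int.even_or_odd (x + y) with h | h
  · refine ⟨(x, y), by simp [unitSquare], ?_⟩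
    simp [columnPairing_of_even h, unitSquare]
  · have h_right : Even (x + 1 + y) := by grind
    refine ⟨(x + 1, y), by simp [unitSquare], ?_⟩
    simp [columnPairing_of_even h_right, unitSquare]

theorem card_unitSquare (x y : ℤ) : (unitSquare x y).card = 4 := by
  simp [unitSquare]

/-- Observation 4.1: there is a pairing `p` of `ℤ × ℤ` such that every unit square
contains a pair; consequently every transversal `S` of `p` intersects every unit square
in at least `1` and at most `3` vertices. -/
theorem square_grid_pairing :
    ∃ p : ℤ × ℤ → ℤ × ℤ,
      (∀ v, p (p v) = v) ∧ (∀ v, p v ≠ v) ∧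
      (∀ x y : ℤ, ∃ v ∈ unitSquare x y, p v ∈ unitSquare x y) ∧
      (∀ S : Set (ℤ × ℤ), (∀ v, v ∈ S ↔ p v ∉ S) →
        ∀ x y : ℤ,
          1 ≤ ((unitSquare x y : Set (ℤ × ℤ)) ∩ S).ncard ∧
          ((unitSquare x y : Set (ℤ × ℤ)) ∩ S).ncard ≤ 3) := by
  refine ⟨columnPairing, columnPairing_involutive, columnPairing_ne_self,
    exists_columnPairing_mem_unitSquare,
    fun S (hS : IsTransversal columnPairing S) x y => ?_⟩
  have hfin := (unitSquare x y).finite_toSet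
  have hpair := exists_columnPairing_mem_unitSquare x y
  have hlt := hS.ncard_inter_lt hfin hpair
  rw [Set.ncard_coe_finset, card_unitSquare] at hlt
  exact ⟨hS.ncard_inter_pos hfin hpair, Nat.le_of_lt_succ hlt⟩
end
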